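/- Let G be a simple graph, let V(G) = V₁ ∪ V₂ be a partition of its vertex set, and let X ⊆ V₁ be the vertex boundary of V₂ in G. Let H be a connected graph with |H| ≥ |V₂|, and let G' := (G[V₁], X) ∨ H be the partial join obtained from the disjoint union of the induced subgraph G[V₁] and H by joining every vertex of X to every vertex of H. Let M ∈ S(G), and suppose σ' is a multiset of |H| − |V₂| real numbers such that the multiset σ(M[V₂]) ∪ σ' is generically realisable for H, where M[V₂] is the principal submatrix of M on the rows and columns indexed by V₂. Then there exists a matrix N ∈ S(G') with spectrum σ(N) = σ(M) ∪ σ' (as multisets). -/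

import Mathlib

open Matrix Filter

/-- `A ∈ S(G)`: real symmetric matrix whose off-diagonal zero pattern is given by `G`. -/
def inS {V : Type*} (G : SimpleGraph V) (A : Matrix V V ℝ) : Prop :=
  A.IsSymm ∧ ∀ i j : V, i ≠ j → (A i j ≠ 0 ↔ G.Adj i j)

/-- The spectrum of a matrix, as the multiset of roots of its characteristic polynomial. -/
noncomputable def specMultiset {V : Type*} [Fintype V] [DecidableEq V]
    (A : Matrix V V ℝ) : Multiset ℝ :=
  A.charpoly.roots

/-- The number of distinct eigenvalues of a matrix. -/
noncomputable def qMat {V : Type*} [Fintype V] [DecidableEq V] (A : Matrix V V ℝ) : ℕ :=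
  (specMultiset A).toFinset.card

/-- `q(G)`: the minimum number of distinct eigenvalues over matrices in `S(G)`. -/
noncomputable def qGraph {V : Type*} [Fintype V] [DecidableEq V] (G : SimpleGraph V) : ℕ :=
  sInf {q | ∃ A : Matrix V V ℝ, inS G A ∧ qMat A = q}

/-- The strong spectral property. -/
def HasSSP {V : Type*} [Fintype V] [DecidableEq V] (A : Matrix V V ℝ) : Prop :=
  ∀ X : Matrix V V ℝ, X.IsSymm → A * X = X * A →
    Matrix.hadamard A X = 0 → Matrix.hadamard (1 : Matrix V V ℝ) X = 0 → X = 0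

/-- Generic realisability of a multiset of eigenvalues for a graph. -/
def GenericallyRealisable {V : Type*} [Fintype V] [DecidableEq V]
    (G : SimpleGraph V) (σ : Multiset ℝ) : Prop :=
  ∀ Y : Finset (V → ℝ), (∀ y ∈ Y, y ≠ 0) →
    ∃ (d : V → ℝ) (U : Matrix V V ℝ),
      Multiset.map d Finset.univ.val = σ ∧ Uᵀ * U = 1 ∧
      inS G (U * Matrix.diagonal d * Uᵀ) ∧
      ∀ y ∈ Y, ∀ i, U.mulVec y i ≠ 0

/-- The partial join `(G₁, X) ∨ G₂`: the disjoint union of `G₁` and `G₂` together with all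
edges joining vertices of `X ⊆ V(G₁)` to vertices of `G₂`. -/
def partialJoin {α β : Type*} (G₁ : SimpleGraph α) (X : Set α) (G₂ : SimpleGraph β) :
    SimpleGraph (α ⊕ β) where
  Adj x y :=
    (∃ a b, G₁.Adj a b ∧ x = Sum.inl a ∧ y = Sum.inl b) ∨
    (∃ a b, G₂.Adj a b ∧ x = Sum.inr a ∧ y = Sum.inr b) ∨
    (∃ a ∈ X, ∃ b, x = Sum.inl a ∧ y = Sum.inr b) ∨
    (∃ a ∈ X, ∃ b, x = Sum.inr b ∧ y = Sum.inl a)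
  symm := by
    constructor
    rintro x y (⟨a, b, hab, rfl, rfl⟩ | ⟨a, b, hab, rfl, rfl⟩ | ⟨a, ha, b, rfl, rfl⟩ |
      ⟨a, ha, b, rfl, rfl⟩)
    · exact Or.inl ⟨b, a, hab.symm, rfl, rfl⟩
    · exact Or.inr (Or.inl ⟨b, a, hab.symm, rfl, rfl⟩)
    · exact Or.inr (Or.inr (Or.inr ⟨a, ha, b, rfl, rfl⟩))
    · exact Or.inr (Or.inr (Or.inl ⟨a, ha, b, rfl, rfl⟩))
  loopless := by
    constructor
    rintro x (⟨a, b, hab, rfl, h⟩ | ⟨a, b, hab, rfl, h⟩ | ⟨a, ha, b, rfl, h⟩ | ⟨a, ha, b, rfl, h⟩)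
    · cases h; exact hab.ne rfl
    · cases h; exact hab.ne rfl
    · exact (Sum.inl_ne_inr h).elim
    · exact (Sum.inr_ne_inl h).elim

/-- The join `G₁ ∨ G₂` of two graphs. -/
def graphJoin {α β : Type*} (G₁ : SimpleGraph α) (G₂ : SimpleGraph β) : SimpleGraph (α ⊕ β) :=
  partialJoin G₁ Set.univ G₂

/-- The disjoint union of a family of graphs. -/
def sigmaGraph {ι : Type*} {α : ι → Type*} (G : ∀ i, SimpleGraph (α i)) :
    SimpleGraph (Σ i, α i) where
  Adj x y := ∃ (i : ι) (a b : α i), (G i).Adj a b ∧ x = ⟨i, a⟩ ∧ y = ⟨i, b⟩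
  symm := by
    constructor
    rintro x y ⟨i, a, b, hab, rfl, rfl⟩
    exact ⟨i, b, a, hab.symm, rfl, rfl⟩
  loopless := by
    constructor
    rintro x ⟨i, a, b, hab, rfl, h⟩
    obtain rfl : a = b := by simpa using h
    exact hab.ne rfl

/-!
Write `M` in blocks along `V(G) = V₁ ∪ V₂`. Adding the elements of `σ'` as an extra diagonal block,
that is, as isolated vertices of `G` which are put into `V₂`, reduces the claim to `σ' = ∅`. Generic
realisability then gives an orthogonal `U` with `U M[V₂] Uᵀ ∈ S(H)` that makes all nonzero rows of
the block `M[V₁, V₂]` nowhere-zero, and `N` is the conjugate of `M` by `1 ⊕ U`.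
-/

section Pattern

variable {V W : Type*}

lemma inS.submatrix {G : SimpleGraph V} {A : Matrix V V ℝ} (hA : inS G A) {f : W → V}
    (hf : f.Injective) : inS (G.comap f) (A.submatrix f f) :=
  ⟨hA.1.submatrix f, fun _ _ hij ↦ hA.2 _ _ (hf.ne hij)⟩

lemma inS_bot_diagonal [DecidableEq V] (d : V → ℝ) : inS ⊥ (diagonal d) :=
  ⟨isSymm_diagonal d, fun _ _ hij ↦ by simp [diagonal_apply_ne d hij]⟩

lemma inS_sum_fromBlocks {G : SimpleGraph V} {H : SimpleGraph W} {A : Matrix V V ℝ}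
    {D : Matrix W W ℝ} (hA : inS G A) (hD : inS H D) : inS (G ⊕g H) (fromBlocks A 0 0 D) := by
  refine ⟨.fromBlocks hA.1 (by simp) hD.1, ?_⟩
  rintro (i | i) (j | j) hij
  · simpa using hA.2 i j (by simpa using hij)
  · simp
  · simp
  · simpa using hD.2 i j (by simpa using hij)

lemma inS_partialJoin_fromBlocks {G : SimpleGraph V} {H : SimpleGraph W} {X : Set V}
    {A : Matrix V V ℝ} {B : Matrix V W ℝ} {D : Matrix W W ℝ} (hA : inS G A) (hD : inS H D)
    (hB : ∀ v w, B v w ≠ 0 ↔ v ∈ X) :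
    inS (partialJoin G X H) (fromBlocks A B Bᵀ D) := by
  refine ⟨.fromBlocks hA.1 rfl hD.1, ?_⟩
  rintro (i | i) (j | j) hij
  · simpa [partialJoin] using hA.2 i j (by simpa using hij)
  · simpa [partialJoin] using hB i j
  · simpa [partialJoin] using hB j i
  · simpa [partialJoin] using hD.2 i j (by simpa using hij)

end Pattern

section Spectrum

variable {V W : Type*} [Fintype V] [DecidableEq V] [Fintype W] [DecidableEq W]

lemma specMultiset_submatrix_equiv (A : Matrix V V ℝ) (e : W ≃ V) :
    specMultiset (A.submatrix e e) = specMultiset A :=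
  congrArg Polynomial.roots (charpoly_reindex e.symm A)

lemma specMultiset_diagonal (d : V → ℝ) :
    specMultiset (diagonal d) = Finset.univ.val.map d := by
  have hprod : (diagonal d).charpoly =
      ((Finset.univ.val.map d).map fun a ↦ Polynomial.X - Polynomial.C a).prod := by
    rw [charpoly_diagonal, Multiset.map_map]
    rfl
  rw [specMultiset, hprod, Polynomial.roots_multiset_prod_X_sub_C]

lemma specMultiset_fromBlocks_zero (A : Matrix V V ℝ) (D : Matrix W W ℝ) :
    specMultiset (fromBlocks A 0 0 D) = specMultiset A + specMultiset D := by
  rw [specMultiset, charpoly_fromBlocks_zero₁₂,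
    Polynomial.roots_mul (A.charpoly_monic.mul D.charpoly_monic).ne_zero]
  rfl

lemma charpoly_conj_of_mul_eq_one {R : Type*} [CommRing R] [Nontrivial R] {P : Matrix W V R}
    {Q : Matrix V W R} (hQP : Q * P = 1) (hPQ : P * Q = 1) (A : Matrix V V R) :
    (P * A * Q).charpoly = A.charpoly := by
  have hcard : Fintype.card V = Fintype.card W := square_of_invertible Q P hQP hPQ
  rw [Matrix.mul_assoc, charpoly_mul_comm_of_le P (A * Q) hcard.le, hcard, Nat.sub_self, pow_zero,
    one_mul, Matrix.mul_assoc, hQP, Matrix.mul_one]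

lemma specMultiset_conj_transpose {U : Matrix W V ℝ} (hU : Uᵀ * U = 1) (hU' : U * Uᵀ = 1)
    (A : Matrix V V ℝ) : specMultiset (U * A * Uᵀ) = specMultiset A :=
  congrArg Polynomial.roots (charpoly_conj_of_mul_eq_one hU hU' A)

lemma exists_orthogonal_diagonal {C : Matrix V V ℝ} (hC : C.IsSymm) :
    ∃ (Q : Matrix V V ℝ) (l : V → ℝ), Q * Qᵀ = 1 ∧ Q * C * Qᵀ = diagonal l := by
  have hC' : C.IsHermitian := isHermitian_iff_isSymm.mpr hC
  refine ⟨(hC'.eigenvectorUnitary : Matrix V V ℝ)ᵀ, hC'.eigenvalues, ?_, ?_⟩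
  · simpa [star_eq_conjTranspose] using Unitary.coe_star_mul_self hC'.eigenvectorUnitary
  · simpa [star_eq_conjTranspose, Unitary.conjStarAlgAut_apply] using
      hC'.conjStarAlgAut_star_eigenvectorUnitary

end Spectrum

lemma exists_equiv_comp_eq_of_map_univ_eq {ι κ α : Type*} [Fintype ι] [Fintype κ] {f : ι → α}
    {g : κ → α} (hfg : Finset.univ.val.map f = Finset.univ.val.map g) :
    ∃ e : ι ≃ κ, g ∘ e = f := by
  classical
  have hfiber (c : α) : Fintype.card {i // f i = c} = Fintype.card {k // g k = c} := by
    have hcount := congrArg (Multiset.count c) hfg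
    simp only [Multiset.count_map, eq_comm (a := c)] at hcount
    simpa only [Fintype.card_subtype, Finset.card_def, Finset.filter_val] using hcount
  exact ⟨Equiv.ofFiberEquiv fun c ↦ Fintype.equivOfCardEq (hfiber c),
    funext fun i ↦ Equiv.ofFiberEquiv_map _ i⟩

section GenericRealisation

variable {α β κ η : Type*} [Fintype α] [DecidableEq α] [Fintype β] [DecidableEq β] [Fintype κ]
  [DecidableEq κ] [Fintype η] [DecidableEq η]

lemma GenericallyRealisable.exists_conj {H : SimpleGraph η} {C : Matrix κ κ ℝ}
    (hH : GenericallyRealisable H (specMultiset C)) (hC : C.IsSymm) {Y : Finset (κ → ℝ)}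
    (hY : ∀ y ∈ Y, y ≠ 0) :
    ∃ U : Matrix η κ ℝ, Uᵀ * U = 1 ∧ U * Uᵀ = 1 ∧ inS H (U * C * Uᵀ) ∧
      ∀ y ∈ Y, ∀ i, (U *ᵥ y) i ≠ 0 := by
  obtain ⟨Q, l, hQ, hQC⟩ := exists_orthogonal_diagonal hC
  have hl : specMultiset C = Finset.univ.val.map l := by
    rw [← specMultiset_conj_transpose (mul_eq_one_comm.mp hQ) hQ, hQC, specMultiset_diagonal]
  let P (e : η ≃ κ) : Matrix η κ ℝ := Q.submatrix e id
  have hP (e : η ≃ κ) : (P e)ᵀ * P e = 1 := by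
    rw [transpose_submatrix, submatrix_mul_equiv, mul_eq_one_comm.mp hQ, submatrix_id_id]
  have hP' (e : η ≃ κ) : P e * (P e)ᵀ = 1 := by
    rw [transpose_submatrix, ← submatrix_mul _ _ _ _ _ Function.bijective_id, hQ,
      submatrix_one_equiv]
  have hPC (e : η ≃ κ) : P e * C * (P e)ᵀ = diagonal (l ∘ e) := by
    rw [← submatrix_diagonal_equiv, ← hQC]
    rfl
  -- `d` may list the eigenvalues in any order, so the vectors are prepared for every matching `e`.
  obtain ⟨d, U, hd, hU, hUH, hUY⟩ := hH ((Finset.univ ×ˢ Y).image fun p ↦ P p.1 *ᵥ p.2) <| by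
    simp only [Finset.mem_image, Finset.mem_product, Finset.mem_univ, true_and]
    rintro _ ⟨⟨e, y⟩, hy, rfl⟩ h0
    refine hY y hy ?_
    simpa [hP] using congrArg ((P e)ᵀ *ᵥ ·) h0
  obtain ⟨e, rfl⟩ := exists_equiv_comp_eq_of_map_univ_eq (hd.trans hl)
  have hU' : U * Uᵀ = 1 := mul_eq_one_comm.mp hU
  refine ⟨U * P e, ?_, ?_, ?_, fun y hy ↦ ?_⟩
  · rw [transpose_mul, Matrix.mul_assoc, ← Matrix.mul_assoc Uᵀ, hU, Matrix.one_mul, hP]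
  · rw [transpose_mul, Matrix.mul_assoc, ← Matrix.mul_assoc (P e), hP', Matrix.one_mul, hU']
  · rw [← hPC] at hUH
    simpa only [transpose_mul, Matrix.mul_assoc] using hUH
  · rw [← mulVec_mulVec]
    exact hUY _ (Finset.mem_image.mpr ⟨(e, y), by simpa using hy, rfl⟩)

theorem exists_inS_partialJoin_specMultiset_eq {G : SimpleGraph (α ⊕ β)}
    {M : Matrix (α ⊕ β) (α ⊕ β) ℝ} (hM : inS G M) {H : SimpleGraph η}
    (hH : GenericallyRealisable H (specMultiset M.toBlocks₂₂)) :
    ∃ N : Matrix (α ⊕ η) (α ⊕ η) ℝ,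
      inS (partialJoin (G.comap Sum.inl) {a | ∃ b, G.Adj (Sum.inl a) (Sum.inr b)} H) N ∧
      specMultiset N = specMultiset M := by
  have hboundary (a : α) : M.toBlocks₁₂ a ≠ 0 ↔ ∃ b, G.Adj (Sum.inl a) (Sum.inr b) := by
    simp only [Function.ne_iff, ← hM.2 _ _ Sum.inl_ne_inr]
    rfl
  obtain ⟨U, hU, hU', hUH, hUY⟩ := hH.exists_conj (hM.1.submatrix Sum.inr)
    (Y := (Finset.univ.image M.toBlocks₁₂).filter (· ≠ 0)) (by simp)
  have hrow (a : α) (i : η) : (M.toBlocks₁₂ * Uᵀ) a i = (U *ᵥ M.toBlocks₁₂ a) i := by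
    rw [mul_apply_eq_vecMul, vecMul_transpose]
  refine ⟨fromBlocks M.toBlocks₁₁ (M.toBlocks₁₂ * Uᵀ) (M.toBlocks₁₂ * Uᵀ)ᵀ (U * M.toBlocks₂₂ * Uᵀ),
    inS_partialJoin_fromBlocks (hM.submatrix Sum.inl_injective) hUH fun a i ↦ ?_, ?_⟩
  · rw [hrow, Set.mem_ofPred_eq, ← hboundary]
    refine ⟨fun hne h0 ↦ hne (by simp [h0]), fun hne ↦ hUY _ (Finset.mem_filter.mpr ⟨?_, hne⟩) i⟩
    exact Finset.mem_image_of_mem _ (Finset.mem_univ a)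
  · let S : Matrix (α ⊕ η) (α ⊕ β) ℝ := fromBlocks 1 0 0 U
    have hS : Sᵀ * S = 1 := by simp [S, fromBlocks_transpose, fromBlocks_multiply, hU]
    have hS' : S * Sᵀ = 1 := by simp [S, fromBlocks_transpose, fromBlocks_multiply, hU']
    have hM₂₁ : M.toBlocks₁₂ᵀ = M.toBlocks₂₁ := congrArg toBlocks₂₁ hM.1
    rw [← specMultiset_conj_transpose hS hS' M]
    conv_rhs => rw [← fromBlocks_toBlocks M]
    simp [S, fromBlocks_transpose, fromBlocks_multiply, hM₂₁]

theorem exists_inS_partialJoin_specMultiset_eq_add {G : SimpleGraph (α ⊕ β)}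
    {M : Matrix (α ⊕ β) (α ⊕ β) ℝ} (hM : inS G M) {H : SimpleGraph η} {τ : Multiset ℝ}
    (hH : GenericallyRealisable H (specMultiset M.toBlocks₂₂ + τ)) :
    ∃ N : Matrix (α ⊕ η) (α ⊕ η) ℝ,
      inS (partialJoin (G.comap Sum.inl) {a | ∃ b, G.Adj (Sum.inl a) (Sum.inr b)} H) N ∧
      specMultiset N = specMultiset M + τ := by
  classical
  let D : Matrix τ τ ℝ := diagonal fun t ↦ t.1
  have hD : specMultiset D = τ := by simp [D, specMultiset_diagonal]
  let e := (Equiv.sumAssoc α β τ).symm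
  let M' := (fromBlocks M 0 0 D).submatrix e e
  have hM' : inS ((G ⊕g ⊥).comap e) M' :=
    (inS_sum_fromBlocks hM (inS_bot_diagonal _)).submatrix e.injective
  have hM'₂₂ : M'.toBlocks₂₂ = fromBlocks M.toBlocks₂₂ 0 0 D := by
    ext (i | i) (j | j) <;> rfl
  obtain ⟨N, hN, hspec⟩ := exists_inS_partialJoin_specMultiset_eq hM' (H := H) <| by
    rwa [hM'₂₂, specMultiset_fromBlocks_zero, hD]
  refine ⟨N, ?_, ?_⟩
  · convert hN using 2
    · ext a b
      simp [e]
    · ext a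
      simp [e]
  · rw [hspec, specMultiset_submatrix_equiv, specMultiset_fromBlocks_zero, hD]

end GenericRealisation

theorem statement12_general {V η : Type*} [Fintype V] [DecidableEq V] [Fintype η] [DecidableEq η]
    (G : SimpleGraph V) (V₂ : Finset V) (H : SimpleGraph η) (M : Matrix V V ℝ) (hM : inS G M)
    (σ' : Multiset ℝ)
    (hgen : GenericallyRealisable H
      (specMultiset (M.submatrix (Subtype.val : V₂ → V) Subtype.val) + σ')) :
    ∃ N : Matrix ((↑(V₂ᶜ : Finset V) : Set V) ⊕ η) ((↑(V₂ᶜ : Finset V) : Set V) ⊕ η) ℝ,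
      inS (partialJoin (G.induce (↑(V₂ᶜ : Finset V) : Set V)) {a | ∃ w ∈ V₂, G.Adj a w} H) N ∧
      specMultiset N = specMultiset M + σ' := by
  let e : (↑(V₂ᶜ : Finset V) : Set V) ⊕ V₂ ≃ V :=
    ((Equiv.refl _).sumCongr (Equiv.subtypeEquivRight fun v ↦ by simp)).trans (Equiv.sumCompl _)
  obtain ⟨N, hN, hspec⟩ :=
    exists_inS_partialJoin_specMultiset_eq_add (hM.submatrix e.injective) hgen
  refine ⟨N, ?_, hspec.trans (by rw [specMultiset_submatrix_equiv])⟩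
  convert hN using 2
  · ext a b
    exact Iff.rfl
  · ext a
    simp [e]

/-- Lemma 3.7: let `V(G) = V₁ ∪ V₂` (with `V₁ = V₂ᶜ`), `X ⊆ V₁` the vertex
boundary of `V₂` in `G`, `H` connected with `|H| ≥ |V₂|` and `G' = (G[V₁], X) ∨ H`. If
`M ∈ S(G)` and `σ'` is a multiset of `|H| − |V₂|` reals with `σ(M[V₂]) ∪ σ'` generically
realisable for `H`, then some `N ∈ S(G')` has spectrum `σ(M) ∪ σ'`. -/
theorem statement12 (n h : ℕ) (G : SimpleGraph (Fin n)) (V₂ : Finset (Fin n))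
    (H : SimpleGraph (Fin h)) (hH : H.Connected) (hsize : V₂.card ≤ h)
    (M : Matrix (Fin n) (Fin n) ℝ) (hM : inS G M)
    (σ' : Multiset ℝ) (hcard : Multiset.card σ' = h - V₂.card)
    (hgen : GenericallyRealisable H
      (specMultiset (M.submatrix (fun a : {x : Fin n // x ∈ V₂} => (a : Fin n))
        (fun a : {x : Fin n // x ∈ V₂} => (a : Fin n))) + σ')) :
    ∃ N : Matrix ((↑(V₂ᶜ : Finset (Fin n)) : Set (Fin n)) ⊕ Fin h)
        ((↑(V₂ᶜ : Finset (Fin n)) : Set (Fin n)) ⊕ Fin h) ℝ,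
      inS (partialJoin (G.induce (↑(V₂ᶜ : Finset (Fin n)) : Set (Fin n)))
        {a : (↑(V₂ᶜ : Finset (Fin n)) : Set (Fin n)) | ∃ w ∈ V₂, G.Adj ↑a w} H) N ∧
      specMultiset N = specMultiset M + σ' :=
  statement12_general G V₂ H M hM σ' hgen
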